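/- Let A^• and B^• be complexes in an abelian category 𝒦. Then the group Hom_{K(𝒦)}(A^•, B^•[1]) of morphisms in the homotopy category is naturally isomorphic to the subgroup of Ext^1_{C(𝒦)}(A^•, B^•) consisting of the classes of degreewise split extensions of complexes. In particular, if Ext^1_𝒦(A^i, B^i) = 0 for all i ∈ ℤ, then Hom_{K(𝒦)}(A^•, B^•[1]) ≅ Ext^1_{C(𝒦)}(A^•, B^•). -/

import Mathlib

/-!
STATEMENT 11: For complexes A^•, B^• in an abelian category 𝒦, the group
Hom_{K(𝒦)}(A^•, B^•[1]) is isomorphic to the subgroup of Ext¹_{C(𝒦)}(A^•, B^•)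
consisting of the classes of degreewise split extensions. In particular, if
Ext¹_𝒦(A^i, B^i) = 0 for all i, then
Hom_{K(𝒦)}(A^•, B^•[1]) ≅ Ext¹_{C(𝒦)}(A^•, B^•).
-/

open CategoryTheory Limits

universe w' w v u

namespace Stmt11

variable {K : Type u} [Category.{v} K] [Abelian K]
  [HasExt.{w'} (CochainComplex K ℤ)]

/-- The property that `x : Ext¹_{C(𝒦)}(A, B)` is the class of a degreewise
split extension of complexes `0 → B → E → A → 0`. -/
def IsDegreewiseSplitClass (A B : CochainComplex K ℤ)
    (x : Abelian.Ext A B 1) : Prop :=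
  ∃ (E : CochainComplex K ℤ) (f : B ⟶ E) (g : E ⟶ A) (zero : f ≫ g = 0)
    (hS : (ShortComplex.mk f g zero).ShortExact),
      (∀ i : ℤ, Nonempty (((ShortComplex.mk f g zero).map
        (HomologicalComplex.eval K (ComplexShape.up ℤ) i)).Splitting)) ∧
      x = hS.extClass

section Helpers

open Pretriangulated CochainComplex HomComplex

/-- Every class in `Ext¹` is the class of a short exact sequence. -/
lemma exists_extClass_eq {C : Type u} [Category.{v} C] [Abelian C] [HasExt.{w} C]
    {X Y : C} (x : Abelian.Ext X Y 1) :
    ∃ (E : C) (f : Y ⟶ E) (g : E ⟶ X) (zero : f ≫ g = 0)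
      (hS : (ShortComplex.mk f g zero).ShortExact), x = hS.extClass := by
  let := HasDerivedCategory.standard C
  let F := DerivedCategory.singleFunctor C 0
  let δ : F.obj X ⟶ (F.obj Y)⟦(1 : ℤ)⟧ := x.hom
  obtain ⟨Z, f₀, g₀, hT₀⟩ := distinguished_cocone_triangle₂ δ
  have hLE : DerivedCategory.IsLE Z 0 := DerivedCategory.TStructure.t.isLE₂ _ hT₀ 0
    (inferInstanceAs (DerivedCategory.IsLE (F.obj Y) 0))
    (inferInstanceAs (DerivedCategory.IsLE (F.obj X) 0))
  have hGE : DerivedCategory.IsGE Z 0 := DerivedCategory.TStructure.t.isGE₂ _ hT₀ 0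
    (inferInstanceAs (DerivedCategory.IsGE (F.obj Y) 0))
    (inferInstanceAs (DerivedCategory.IsGE (F.obj X) 0))
  obtain ⟨E, ⟨e⟩⟩ := DerivedCategory.exists_iso_singleFunctor_obj_of_isGE_of_isLE Z 0
  obtain ⟨f, hf⟩ := F.map_surjective (f₀ ≫ e.hom)
  obtain ⟨g, hg⟩ := F.map_surjective (e.inv ≫ g₀)
  have hT : Triangle.mk (F.map f) (F.map g) δ ∈ distTriang _ := by
    refine isomorphic_distinguished _ hT₀ _ ?_
    exact Triangle.isoMk _ _ (Iso.refl _) e.symm (Iso.refl _)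
      (by change F.map f ≫ e.inv = 𝟙 (F.obj Y) ≫ f₀; rw [hf]; simp)
      (by change F.map g ≫ 𝟙 (F.obj X) = e.inv ≫ g₀; rw [hg]; simp)
      (by
        change δ ≫ (CategoryTheory.shiftFunctor (DerivedCategory C) (1 : ℤ)).map (𝟙 (F.obj Y)) =
          𝟙 (F.obj X) ≫ δ
        simp)
  have hι : ∀ ⦃X Y : C⦄ ⦃n : ℤ⦄ (f : F.obj X ⟶ (F.obj Y)⟦n⟧), n < 0 → f = 0 := by
    intro X Y n f hn
    have h1 : DerivedCategory.TStructure.t.IsLE (F.obj X) 0 :=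
      inferInstanceAs (DerivedCategory.IsLE (F.obj X) 0)
    have h2 : DerivedCategory.TStructure.t.IsGE (F.obj Y) 0 :=
      inferInstanceAs (DerivedCategory.IsGE (F.obj Y) 0)
    have h3 : DerivedCategory.TStructure.t.IsGE ((F.obj Y)⟦n⟧) (-n) :=
      DerivedCategory.TStructure.t.isGE_shift _ 0 n (-n) (by lia)
    exact DerivedCategory.TStructure.t.zero f 0 (-n) (by lia)
  have zero : f ≫ g = 0 := F.map_injective (by
    rw [F.map_comp, F.map_zero]
    exact comp_distTriang_mor_zero₁₂ _ hT)
  have hk := Triangulated.AbelianSubcategory.isLimitKernelForkOfDistTriang hι f g δ hT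
  have hc := Triangulated.AbelianSubcategory.isColimitCokernelCoforkOfDistTriang hι f g δ hT
  have hS : (ShortComplex.mk f g zero).ShortExact :=
    { exact := ShortComplex.exact_of_f_is_kernel _ hk
      mono_f := mono_of_isLimit_fork hk
      epi_g := epi_of_isColimit_cofork hc }
  refine ⟨E, f, g, zero, hS, ?_⟩
  obtain ⟨c, hc1, hc2⟩ := complete_distinguished_triangle_morphism _ _ hT
    hS.singleTriangle_distinguished (𝟙 _) (𝟙 _) (by simp; rfl)
  obtain ⟨c, rfl⟩ := F.map_surjective c
  have : c = 𝟙 _ := by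
    have := hS.epi_g
    rw [← cancel_epi g]
    apply F.map_injective
    rw [F.map_comp]
    change F.map g ≫ F.map c = 𝟙 (F.obj E) ≫ F.map g at hc1
    rw [hc1]
    simp
  subst this
  ext
  rw [ShortComplex.ShortExact.extClass_hom]
  change δ ≫ (CategoryTheory.shiftFunctor (DerivedCategory C) (1 : ℤ)).map (𝟙 (F.obj Y)) =
    F.map (𝟙 X) ≫ hS.singleδ at hc2
  rw [CategoryTheory.Functor.map_id, CategoryTheory.Functor.map_id, Category.comp_id, Category.id_comp] at hc2
  exact hc2

variable {K : Type u} [Category.{v} K] [Abelian K]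

/-- A cochain of degree `0` from `X` to `B` gives a morphism to the cone of the identity. -/
noncomputable def liftId {X B : CochainComplex K ℤ} (β : Cochain X B 0) :
    X ⟶ mappingCone (𝟙 B) :=
  mappingCone.lift (𝟙 B) (-Cocycle.mk (δ 0 1 β) 2 (by lia) (δ_δ 0 1 2 β)) β (by
    simp)

lemma mor₃_eq_zero (B : CochainComplex K ℤ) :
    (HomotopyCategory.quotient K (ComplexShape.up ℤ)).map
      (mappingCone.triangle (𝟙 B)).mor₃ = 0 := by
  let T := mappingCone.triangleh (𝟙 B)
  have h : T.mor₃ ≫ T.mor₁⟦(1 : ℤ)⟧' = 0 := comp_distTriang_mor_zero₃₁ _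
    (HomotopyCategory.mappingCone_triangleh_distinguished (𝟙 B))
  have h1 : IsIso T.mor₁ := by
    change IsIso ((HomotopyCategory.quotient K (ComplexShape.up ℤ)).map (𝟙 B))
    infer_instance
  have h2 : T.mor₃ = 0 := by
    rw [← cancel_mono (T.mor₁⟦(1 : ℤ)⟧'), h, zero_comp]
  have h3 : T.mor₃ = (HomotopyCategory.quotient K (ComplexShape.up ℤ)).map
      (mappingCone.triangle (𝟙 B)).mor₃ ≫
      ((HomotopyCategory.quotient K (ComplexShape.up ℤ)).commShiftIso (1 : ℤ)).hom.app B := rfl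
  rw [h3] at h2
  exact (cancel_mono (((HomotopyCategory.quotient K (ComplexShape.up ℤ)).commShiftIso
    (1 : ℤ)).hom.app B)).1 (h2.trans zero_comp.symm)

/-- The projection of the cone of the identity onto the shift. -/
noncomputable def proj (B : CochainComplex K ℤ) : mappingCone (𝟙 B) ⟶ B⟦(1 : ℤ)⟧ :=
  Cocycle.homOf ((-mappingCone.fst (𝟙 B)).rightShift 1 0 (zero_add 1))

lemma proj_eq_zero (B : CochainComplex K ℤ) :
    (HomotopyCategory.quotient K (ComplexShape.up ℤ)).map (proj B) = 0 :=
  mor₃_eq_zero B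

lemma exists_fac {A B : CochainComplex K ℤ} (φ : A ⟶ B⟦(1 : ℤ)⟧)
    (h : (HomotopyCategory.quotient K (ComplexShape.up ℤ)).map φ = 0) :
    ∃ ψ : A ⟶ mappingCone (𝟙 B), ψ ≫ proj B = φ := by
  rw [HomotopyCategory.quotient_map_eq_zero_iff] at h
  obtain ⟨γ, h⟩ := Cochain.equivHomotopy _ _ h.some
  rw [Cochain.ofHom_zero, add_zero] at h
  refine ⟨liftId (-γ.rightUnshift 0 (by lia)), ?_⟩
  apply Cochain.ofHom_injective
  apply (Cochain.rightShiftAddEquiv A B 1 1 0 (zero_add 1)).symm.injective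
  change (Cochain.ofHom _).rightUnshift 1 (zero_add 1) =
    (Cochain.ofHom _).rightUnshift 1 (zero_add 1)
  have h2 := γ.δ_rightUnshift 0 (by lia) 1 0 (zero_add 1)
  rw [← h] at h2
  have h3 : (Cochain.ofHom φ).rightUnshift 1 (zero_add 1) =
      - δ 0 1 (γ.rightUnshift 0 (by lia)) := by
    rw [h2]; simp
  rw [h3, Cochain.ofHom_comp, proj, Cocycle.cochain_ofHom_homOf_eq_coe]
  ext p q hpq
  have h4 := mappingCone.lift_f_fst_v (𝟙 B)
    (-Cocycle.mk (δ 0 1 (-γ.rightUnshift 0 (by lia))) 2 (by lia) (δ_δ 0 1 2 _))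
    (-γ.rightUnshift 0 (by lia)) (by simp) p q hpq
  rw [Cochain.rightUnshift_v _ 1 (zero_add 1) p q hpq p (add_zero p),
    Cochain.comp_v _ _ (zero_add 0) p p p (add_zero p) (add_zero p)]
  simp only [Cocycle.rightShift_coe]
  rw [Cochain.rightShift_v _ 1 0 (zero_add 1) p p (add_zero p) q hpq]
  simp only [Cochain.ofHom_v, Category.assoc, Iso.inv_hom_id, Category.comp_id]
  change (liftId _).f p ≫ (-(mappingCone.fst (𝟙 B)).1.v p q hpq) = _
  rw [Preadditive.comp_neg]
  refine (congrArg (fun z => -z) h4).trans ?_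
  change - -(δ 0 1 (-γ.rightUnshift 0 (by lia))).v p q hpq = _
  rw [neg_neg, δ_neg]

lemma exists_extend {E B : CochainComplex K ℤ} (f : B ⟶ E)
    (r : ∀ i, E.X i ⟶ B.X i) (hr : ∀ i, f.f i ≫ r i = 𝟙 _) :
    ∃ ψ : E ⟶ mappingCone (𝟙 B), f ≫ ψ = mappingCone.inr (𝟙 B) := by
  refine ⟨liftId (Cochain.ofHoms r), ?_⟩
  ext p
  rw [mappingCone.ext_to_iff _ p (p + 1) rfl]
  constructor
  · simp [liftId, hr, reassoc_of% (hr p)]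
  · simp [liftId, hr]

lemma cone_shortExact (B : CochainComplex K ℤ) :
    ∃ zero : mappingCone.inr (𝟙 B) ≫ proj B = 0,
      (ShortComplex.mk (mappingCone.inr (𝟙 B)) (proj B) zero).ShortExact :=
  ⟨mappingCone.inr_triangleδ (𝟙 B), HomologicalComplex.shortExact_of_degreewise_shortExact _
      (fun n => (mappingCone.triangleRotateShortComplexSplitting (𝟙 B) n).shortExact)⟩

end Helpers

/-- `Hom_{K(𝒦)}(A^•, B^•[1])` is isomorphic (via an injective additive map Φ)
to the subgroup of `Ext¹_{C(𝒦)}(A^•, B^•)` formed by the degreewise split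
extension classes; when `Ext¹_𝒦(A^i, B^i) = 0` for all `i`, the map Φ is an
isomorphism onto all of `Ext¹_{C(𝒦)}(A^•, B^•)`. -/
theorem hom_homotopyCategory_iso_degreewiseSplit_ext
    (K : Type u) [Category.{v} K] [Abelian K] [HasExt.{w} K]
    [HasExt.{w'} (CochainComplex K ℤ)]
    (A B : CochainComplex K ℤ) :
    ∃ Φ : (((HomotopyCategory.quotient K (ComplexShape.up ℤ)).obj A ⟶
        (HomotopyCategory.quotient K (ComplexShape.up ℤ)).obj (B⟦(1 : ℤ)⟧)) →+
          Abelian.Ext A B 1),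
      Function.Injective Φ ∧
      Set.range Φ = {x | IsDegreewiseSplitClass A B x} ∧
      ((∀ i : ℤ, Subsingleton (Abelian.Ext (A.X i) (B.X i) 1)) →
        Function.Bijective Φ) := by
  obtain ⟨zero, hS⟩ := cone_shortExact B
  let Q := HomotopyCategory.quotient K (ComplexShape.up ℤ)
  let q : (A ⟶ B⟦(1 : ℤ)⟧) →+ (Q.obj A ⟶ Q.obj (B⟦(1 : ℤ)⟧)) := Q.mapAddHom
  have hq : Function.Surjective q := Q.map_surjective
  let ε : Abelian.Ext (B⟦(1 : ℤ)⟧) B 1 := hS.extClass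
  let Ψ : (A ⟶ B⟦(1 : ℤ)⟧) →+ Abelian.Ext A B 1 :=
    (ε.postcomp A (zero_add 1)).comp Abelian.Ext.addEquiv₀.symm.toAddMonoidHom
  have hΨ (φ : A ⟶ B⟦(1 : ℤ)⟧) : Ψ φ = (Abelian.Ext.mk₀ φ).comp ε (zero_add 1) := rfl
  have hker : ∀ φ, Ψ φ = 0 ↔ q φ = 0 := by
    intro φ
    constructor
    · intro h
      obtain ⟨y, hy⟩ := Abelian.Ext.covariant_sequence_exact₃ A hS (Abelian.Ext.mk₀ φ)
        (zero_add 1) h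
      obtain ⟨ψ, rfl⟩ := (Abelian.Ext.mk₀_bijective _ _).2 y
      rw [Abelian.Ext.mk₀_comp_mk₀] at hy
      have hy' := (Abelian.Ext.mk₀_bijective _ _).1 hy
      change Q.map φ = 0
      rw [← hy', Q.map_comp]
      have := proj_eq_zero B
      change Q.map ψ ≫ Q.map (proj B) = 0
      rw [this, comp_zero]
    · intro h
      obtain ⟨ψ, rfl⟩ := exists_fac φ h
      rw [hΨ, ← Abelian.Ext.mk₀_comp_mk₀_assoc, hS.comp_extClass, Abelian.Ext.comp_zero]
  let Φ : (Q.obj A ⟶ Q.obj (B⟦(1 : ℤ)⟧)) →+ Abelian.Ext A B 1 :=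
    q.liftOfSurjective hq ⟨Ψ, fun φ h => (hker φ).2 h⟩
  have hΦ (φ) : Φ (q φ) = Ψ φ := q.liftOfRightInverse_comp_apply _ _ _ _
  -- the range consists of the classes killed in the `Ext` group of the cone
  have hrange (x : Abelian.Ext A B 1) : x ∈ Set.range Φ ↔
      x.comp (Abelian.Ext.mk₀ (CochainComplex.mappingCone.inr (𝟙 B))) (add_zero 1) = 0 := by
    constructor
    · rintro ⟨y, rfl⟩
      obtain ⟨φ, rfl⟩ := hq y
      rw [hΦ, hΨ, Abelian.Ext.comp_assoc _ _ _ _ (add_zero 1) (by lia), hS.extClass_comp,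
        Abelian.Ext.comp_zero]
    · intro h
      obtain ⟨y, hy⟩ := Abelian.Ext.covariant_sequence_exact₁ A hS x h (zero_add 1)
      obtain ⟨φ, rfl⟩ := (Abelian.Ext.mk₀_bijective _ _).2 y
      exact ⟨q φ, (hΦ φ).trans hy⟩
  have hsplit (x : Abelian.Ext A B 1) (hx : IsDegreewiseSplitClass A B x) :
      x ∈ Set.range Φ := by
    obtain ⟨E, f, g, zero', hE, σ, rfl⟩ := hx
    rw [hrange]
    obtain ⟨ψ, hψ⟩ := exists_extend f (fun i => (σ i).some.r) (fun i => (σ i).some.f_r)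
    rw [← hψ, ← Abelian.Ext.mk₀_comp_mk₀]
    exact hE.extClass_comp_assoc _
  refine ⟨Φ, ?_, ?_, ?_⟩
  · rw [injective_iff_map_eq_zero]
    intro y hy
    obtain ⟨φ, rfl⟩ := hq y
    rw [hΦ] at hy
    exact (hker φ).1 hy
  · ext x
    refine ⟨fun hx => ?_, hsplit x⟩
    rw [hrange] at hx
    obtain ⟨E, f, g, zero', hE, rfl⟩ := exists_extClass_eq x
    obtain ⟨y, hy⟩ := Abelian.Ext.contravariant_sequence_exact₁ hE _ _ (add_zero 1) hx
    obtain ⟨ψ, rfl⟩ := (Abelian.Ext.mk₀_bijective _ _).2 y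
    rw [Abelian.Ext.mk₀_comp_mk₀] at hy
    have hy' : f ≫ ψ = _ := (Abelian.Ext.mk₀_bijective _ _).1 hy
    refine ⟨E, f, g, zero', hE, fun i => ⟨?_⟩, rfl⟩
    have hEi := hE.map_of_exact (HomologicalComplex.eval K (ComplexShape.up ℤ) i)
    refine ShortComplex.Splitting.ofExactOfRetraction _ hEi.exact
      (ψ.f i ≫ (CochainComplex.mappingCone.snd (𝟙 B)).v i i (add_zero i)) ?_ hEi.epi_g
    change f.f i ≫ ψ.f i ≫ _ = 𝟙 (B.X i)
    rw [← HomologicalComplex.comp_f_assoc, hy']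
    simp
  · intro hExt
    refine ⟨?_, fun x => ?_⟩
    · rw [injective_iff_map_eq_zero]
      intro y hy
      obtain ⟨φ, rfl⟩ := hq y
      rw [hΦ] at hy
      exact (hker φ).1 hy
    · apply hsplit
      obtain ⟨E, f, g, zero', hE, rfl⟩ := exists_extClass_eq x
      refine ⟨E, f, g, zero', hE, fun i => ⟨?_⟩, rfl⟩
      have hEi := hE.map_of_exact (HomologicalComplex.eval K (ComplexShape.up ℤ) i)
      have h0 : hEi.extClass.comp (Abelian.Ext.mk₀ (𝟙 (B.X i))) (add_zero 1) = 0 := by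
        have h1 : (hEi.extClass : Abelian.Ext (A.X i) (B.X i) 1) = 0 :=
          (hExt i).elim _ _
        exact (congrArg (fun z : Abelian.Ext (A.X i) (B.X i) 1 =>
          z.comp (Abelian.Ext.mk₀ (𝟙 (B.X i))) (add_zero 1)) h1).trans
          (Abelian.Ext.zero_comp ..)
      have h2 := Abelian.Ext.contravariant_sequence_exact₁ hEi _ _ (add_zero 1) h0
      have h3 : ∃ r : E.X i ⟶ B.X i, f.f i ≫ r = 𝟙 (B.X i) := by
        obtain ⟨y, hy⟩ := h2
        obtain ⟨r, rfl⟩ := (Abelian.Ext.mk₀_bijective _ _).2 y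
        rw [Abelian.Ext.mk₀_comp_mk₀] at hy
        exact ⟨r, (Abelian.Ext.mk₀_bijective _ _).1 hy⟩
      exact ShortComplex.Splitting.ofExactOfRetraction _ hEi.exact
        h3.choose h3.choose_spec hEi.epi_g

end Stmt11
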